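/- Let g > 0 and let h₀ > 0, c₀, w₀ be constants. On the set of times t with c₀ + w₀ t > 0, define h(t) = h₀/(c₀ + w₀ t)² and u(t,r) = w₀ r/(c₀ + w₀ t). Then (h,u) is an exact solution of the radially symmetric Serre–Green–Naghdi equations: (r h)_t + (r h u)_r = 0 and h(u_t + u u_r) + p_r = 0, where p = g h²/2 + (h²/3) ḧ with ḣ = h_t + u h_r and ḧ = (ḣ)_t + u (ḣ)_r; moreover p is independent of r, so p_r = 0. -/

import Mathlib

noncomputable section

/-- Partial derivative in the time variable of a function of `(t, r)`. -/
def pT2 (f : ℝ → ℝ → ℝ) : ℝ → ℝ → ℝ := fun t r => deriv (fun s => f s r) t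

/-- Partial derivative in the radial variable of a function of `(t, r)`. -/
def pR2 (f : ℝ → ℝ → ℝ) : ℝ → ℝ → ℝ := fun t r => deriv (fun s => f t s) r

/-- The radial derivative of a field depending only on time vanishes. -/
lemma pR2_of_time_only (f : ℝ → ℝ) (t r : ℝ) : pR2 (fun s _ => f s) t r = 0 := by
  simp [pR2]

/-- The material derivative of a field depending only on time is its time derivative. -/
lemma material_deriv_of_time_only (f : ℝ → ℝ) (u : ℝ → ℝ → ℝ) :
    (fun t r => pT2 (fun s _ => f s) t r + u t r * pR2 (fun s _ => f s) t r) =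
      fun t _ => deriv f t := by
  funext t r
  simp [pT2, pR2]

/-- For constants `h₀ > 0`, `c₀`, `w₀`, the fields `h(t) = h₀/(c₀ + w₀t)²` and
`u(t,r) = w₀r/(c₀ + w₀t)` form, on the set of times with `c₀ + w₀t > 0`, an exact
solution of the radially symmetric Serre–Green–Naghdi equations
`(rh)ₜ + (rhu)ᵣ = 0` and `h(uₜ + uuᵣ) + pᵣ = 0` with `p = gh²/2 + (h²/3)ḧ`;
moreover `p` is independent of `r`, i.e. `pᵣ = 0`. -/
theorem sgn_radial_exact_solution
    (g h0 c0 w0 : ℝ) (hg : 0 < g) (h0_pos : 0 < h0)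
    (h u : ℝ → ℝ → ℝ)
    (h_def : h = fun t _r => h0 / (c0 + w0 * t) ^ 2)
    (u_def : u = fun t r => w0 * r / (c0 + w0 * t))
    (hdot : ℝ → ℝ → ℝ)
    (hdot_def : hdot = fun t r => pT2 h t r + u t r * pR2 h t r)
    (hddot : ℝ → ℝ → ℝ)
    (hddot_def : hddot = fun t r => pT2 hdot t r + u t r * pR2 hdot t r)
    (p : ℝ → ℝ → ℝ)
    (p_def : p = fun t r => g * (h t r) ^ 2 / 2 + (h t r) ^ 2 / 3 * hddot t r) :
    ∀ t : ℝ, 0 < c0 + w0 * t → ∀ r : ℝ, 0 ≤ r →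
      (pT2 (fun t r => r * h t r) t r + pR2 (fun t r => r * h t r * u t r) t r = 0) ∧
      (h t r * (pT2 u t r + u t r * pR2 u t r) + pR2 p t r = 0) ∧
      pR2 p t r = 0 := by
  intro t ht r _
  have hne : c0 + w0 * t ≠ 0 := ht.ne'
  have hp : pR2 p t r = 0 := by
    rw [h_def, material_deriv_of_time_only] at hdot_def
    rw [hdot_def, material_deriv_of_time_only] at hddot_def
    rw [p_def, h_def, hddot_def]
    exact pR2_of_time_only (fun t => g * (h0 / (c0 + w0 * t) ^ 2) ^ 2 / 2 +
      (h0 / (c0 + w0 * t) ^ 2) ^ 2 / 3 *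
        deriv (deriv fun s => h0 / (c0 + w0 * s) ^ 2) t) t r
  have hc : HasDerivAt (fun s => c0 + w0 * s) w0 t := by
    simpa using ((hasDerivAt_id t).const_mul w0).const_add c0
  have h_mass_t : pT2 (fun t r => r * h t r) t r = -(2 * r * h0 * w0) / (c0 + w0 * t) ^ 3 := by
    subst h_def
    refine ((((hasDerivAt_const t h0).fun_div (hc.fun_pow 2) (pow_ne_zero 2 hne)).const_mul
      r).congr_deriv ?_).deriv
    field_simp
    ring
  have h_flux_r : pR2 (fun t r => r * h t r * u t r) t r =
      2 * r * h0 * w0 / (c0 + w0 * t) ^ 3 := by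
    subst h_def u_def
    refine ((((hasDerivAt_id' r).mul_const (h0 / (c0 + w0 * t) ^ 2)).fun_mul
      (((hasDerivAt_id' r).const_mul w0).div_const (c0 + w0 * t))).congr_deriv ?_).deriv
    field_simp
    ring
  have h_vel_t : pT2 u t r = -(w0 ^ 2 * r) / (c0 + w0 * t) ^ 2 := by
    subst u_def
    refine (((hasDerivAt_const t (w0 * r)).fun_div hc hne).congr_deriv ?_).deriv
    ring
  have h_vel_r : pR2 u t r = w0 / (c0 + w0 * t) := by
    subst u_def
    refine ((((hasDerivAt_id' r).const_mul w0).div_const (c0 + w0 * t)).congr_deriv ?_).deriv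
    ring
  refine ⟨?_, ?_, hp⟩
  · rw [h_mass_t, h_flux_r]
    ring
  · rw [hp, h_vel_t, h_vel_r, u_def]
    field_simp
    ring
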